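/- Let f be an expansive homeomorphism of a compact metric space (M,d) with expansivity constant ξ, where d is self-similar for f with expanding factor λ > 1 and constant ξ. Then for all ε > 0 there is δ > 0 such that if (x,y,z) is a dynamical triangle with x ≠ y and max{d(x,y), d(x,z), d(y,z)} < δ, then |d(x,y)/max{d(x,z), d(z,y)} − 1| < ε. -/

import Mathlib

open Filter Topology

/-!
Self-similarity leaves a pair two options at each step: it is stretched by exactly `lam` forwards or
backwards in time. A pair stretched forwards stays stretched forwards while its orbit remains
`ξ`-close, so a pair whose forward orbit is `ξ`-close for ever is contracted at rate exactly
`lam⁻¹`.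

In a small triangle, `n` forward steps thus multiply the unstable side `xz` by `lam ^ n` and divide
the stable side `yz` by `lam ^ n`. If `f` stretches `xy`, then `xy` is also multiplied by `lam ^ n`,
and the triangle inequality for the image shows that `d(x, y)` differs from `d(x, z)` by at most
`d(y, z) / lam ^ (2 * n)`. Whichever of `f`, `f⁻¹` stretches `xy`, the other one still bounds
`d(x, y)` below by the remaining side up to the same error.
-/

section Definitions

variable {M : Type*} [PseudoMetricSpace M]

/-- The metric is self-similar for `f` with constant `ξ` and expanding factor `lam`: each pair at
distance at most `ξ` is stretched by exactly `lam` by `f` or by its inverse, and by no more than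
that by the other one. -/
def IsSelfSimilar (f : Equiv.Perm M) (ξ lam : ℝ) : Prop :=
  ∀ p q : M, dist p q ≤ ξ →
    max (dist (f p) (f q)) (dist (f.symm p) (f.symm q)) = lam * dist p q

/-- The local stable set `W^s_r(x)` of `f`. The local unstable set `W^u_r(x)` of `f` is written
`localStableSet f.symm r x`. -/
def localStableSet (f : Equiv.Perm M) (r : ℝ) (x : M) : Set M :=
  {y | ∀ n : ℕ, dist ((f ^ n) x) ((f ^ n) y) ≤ r}

/-- Dynamical triangles of size `r`: the vertex `z` lies in `W^u_r(x) ∩ W^s_r(y)`. The usual notion,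
for a metric self-similar with constant `ξ` and factor `lam`, has `r = ξ / (2 * lam)`. -/
structure IsDynamicalTriangle (f : Equiv.Perm M) (r : ℝ) (x y z : M) : Prop where
  mem_unstable : z ∈ localStableSet f.symm r x
  mem_stable : z ∈ localStableSet f r y

end Definitions

section LocalStableSet

variable {M : Type*} [PseudoMetricSpace M] {f : Equiv.Perm M} {r : ℝ} {x y z : M}

theorem dist_le_of_mem_localStableSet (h : y ∈ localStableSet f r x) : dist x y ≤ r := h 0

theorem pow_apply_mem_localStableSet (h : y ∈ localStableSet f r x) (n : ℕ) :
    (f ^ n) y ∈ localStableSet f r ((f ^ n) x) := fun m => by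
  simpa only [pow_add, Equiv.Perm.mul_apply] using h (m + n)

theorem IsDynamicalTriangle.symm (h : IsDynamicalTriangle f r x y z) :
    IsDynamicalTriangle f.symm r y x z :=
  ⟨h.mem_stable, h.mem_unstable⟩

end LocalStableSet

namespace IsSelfSimilar

variable {M : Type*} [PseudoMetricSpace M] {f : Equiv.Perm M} {ξ lam : ℝ} {p q x y z : M}

theorem symm (hf : IsSelfSimilar f ξ lam) : IsSelfSimilar f.symm ξ lam := fun p q hpq =>
  (max_comm _ _).trans (hf p q hpq)

theorem dist_apply_le (hf : IsSelfSimilar f ξ lam) (hpq : dist p q ≤ ξ) :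
    dist (f p) (f q) ≤ lam * dist p q :=
  (le_max_left _ _).trans_eq (hf p q hpq)

theorem dist_apply_eq_or_dist_symm_apply_eq (hf : IsSelfSimilar f ξ lam) (hpq : dist p q ≤ ξ) :
    dist (f p) (f q) = lam * dist p q ∨ dist (f.symm p) (f.symm q) = lam * dist p q := by
  rw [← hf p q hpq]
  exact (max_choice _ _).imp Eq.symm Eq.symm

theorem dist_pow_apply_le (hf : IsSelfSimilar f ξ lam) (hlam : 1 ≤ lam) {n : ℕ}
    (hpq : lam ^ n * dist p q ≤ ξ) :
    dist ((f ^ n) p) ((f ^ n) q) ≤ lam ^ n * dist p q := by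
  induction n with
  | zero => simp
  | succ n ih =>
    have hpow : lam ^ n * dist p q ≤ lam ^ (n + 1) * dist p q := by
      gcongr
      exact n.le_succ
    have hn := ih (hpow.trans hpq)
    calc dist ((f ^ (n + 1)) p) ((f ^ (n + 1)) q)
        = dist (f ((f ^ n) p)) (f ((f ^ n) q)) := by simp only [pow_succ', Equiv.Perm.mul_apply]
      _ ≤ lam * dist ((f ^ n) p) ((f ^ n) q) := hf.dist_apply_le (hn.trans (hpow.trans hpq))
      _ ≤ lam * (lam ^ n * dist p q) := by gcongr
      _ = lam ^ (n + 1) * dist p q := by ring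

theorem dist_apply_apply_eq (hf : IsSelfSimilar f ξ lam) (hlam : 1 < lam)
    (hstretch : dist (f p) (f q) = lam * dist p q) (hle : dist (f p) (f q) ≤ ξ) :
    dist (f (f p)) (f (f q)) = lam * dist (f p) (f q) := by
  rcases hf.dist_apply_eq_or_dist_symm_apply_eq hle with hfwd | hbwd
  · exact hfwd
  · simp only [Equiv.symm_apply_apply] at hbwd
    have hzero : dist p q = 0 := by
      by_contra hne
      have hpos : 0 < dist p q := dist_nonneg.lt_of_ne' hne
      have hfpos : 0 < dist (f p) (f q) := by
        rw [hstretch]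
        positivity
      have hlt : dist p q < dist (f p) (f q) := hstretch ▸ lt_mul_of_one_lt_left hpos hlam
      exact hbwd.not_lt (hlt.trans (lt_mul_of_one_lt_left hfpos hlam))
    have hfzero : dist (f p) (f q) = 0 := by rw [hstretch, hzero, mul_zero]
    have hffle := hf.dist_apply_le hle
    rw [hfzero, mul_zero] at hffle ⊢
    exact hffle.antisymm dist_nonneg

theorem dist_pow_succ_apply_eq (hf : IsSelfSimilar f ξ lam) (hlam : 1 < lam)
    (hstretch : dist (f p) (f q) = lam * dist p q) {n : ℕ}
    (hle : ∀ m ≤ n, dist ((f ^ m) p) ((f ^ m) q) ≤ ξ) :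
    dist ((f ^ (n + 1)) p) ((f ^ (n + 1)) q) = lam * dist ((f ^ n) p) ((f ^ n) q) := by
  induction n with
  | zero => simpa using hstretch
  | succ n ih =>
    have hn := ih fun m hm => hle m (hm.trans n.le_succ)
    have hn_le := hle (n + 1) le_rfl
    rw [pow_succ' f (n + 1)]
    simp only [pow_succ' f n, Equiv.Perm.mul_apply] at hn hn_le ⊢
    exact hf.dist_apply_apply_eq hlam hn hn_le

theorem dist_pow_apply_eq (hf : IsSelfSimilar f ξ lam) (hlam : 1 < lam)
    (hstretch : dist (f p) (f q) = lam * dist p q) {n : ℕ}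
    (hle : ∀ m < n, dist ((f ^ m) p) ((f ^ m) q) ≤ ξ) :
    dist ((f ^ n) p) ((f ^ n) q) = lam ^ n * dist p q := by
  induction n with
  | zero => simp
  | succ n ih =>
    rw [hf.dist_pow_succ_apply_eq hlam hstretch fun m hm => hle m (Nat.lt_succ_of_le hm),
      ih fun m hm => hle m (hm.trans n.lt_succ_self), pow_succ', mul_assoc]

theorem dist_pow_apply_eq_of_pow_mul_dist_le (hf : IsSelfSimilar f ξ lam) (hlam : 1 < lam)
    (hstretch : dist (f p) (f q) = lam * dist p q) {n : ℕ} (hpq : lam ^ n * dist p q ≤ ξ) :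
    dist ((f ^ n) p) ((f ^ n) q) = lam ^ n * dist p q := by
  refine hf.dist_pow_apply_eq hlam hstretch fun m hm => ?_
  have hm_le : lam ^ m * dist p q ≤ ξ := by
    refine le_trans ?_ hpq
    gcongr
    exact hlam.le
  exact (hf.dist_pow_apply_le hlam.le hm_le).trans hm_le

theorem dist_symm_apply_eq_of_mem_localStableSet (hf : IsSelfSimilar f ξ lam) (hlam : 1 < lam)
    (h : q ∈ localStableSet f ξ p) :
    dist (f.symm p) (f.symm q) = lam * dist p q := by
  have hpq := dist_le_of_mem_localStableSet h
  by_contra hne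
  have hstretch := (hf.dist_apply_eq_or_dist_symm_apply_eq hpq).resolve_right hne
  have hpos : 0 < dist p q := by
    have hlt := (hf.symm.dist_apply_le hpq).lt_of_ne hne
    exact pos_of_mul_pos_right (dist_nonneg.trans_lt hlt) (zero_le_one.trans hlam.le)
  obtain ⟨n, hn⟩ := pow_unbounded_of_one_lt (ξ / dist p q) hlam
  have hgrow := hf.dist_pow_apply_eq hlam hstretch (n := n) fun m _ => h m
  exact (h n).not_gt (hgrow ▸ (div_lt_iff₀ hpos).1 hn)

theorem dist_pow_apply_eq_div_of_mem_localStableSet (hf : IsSelfSimilar f ξ lam) (hlam : 1 < lam)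
    (h : q ∈ localStableSet f ξ p) (n : ℕ) :
    dist ((f ^ n) p) ((f ^ n) q) = dist p q / lam ^ n := by
  induction n with
  | zero => simp
  | succ n ih =>
    have hback := hf.dist_symm_apply_eq_of_mem_localStableSet hlam
      (pow_apply_mem_localStableSet h (n + 1))
    simp only [pow_succ' f n, Equiv.Perm.mul_apply, Equiv.symm_apply_apply] at hback ⊢
    rw [pow_succ, ← div_div, ← ih, hback, mul_div_cancel_left₀ _ (zero_lt_one.trans hlam).ne']

theorem abs_dist_pow_apply_sub_le (hf : IsSelfSimilar f ξ lam) (hlam : 1 < lam)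
    (h : IsDynamicalTriangle f ξ x y z) {n : ℕ} (hxz : lam ^ n * dist x z ≤ ξ) :
    |dist ((f ^ n) x) ((f ^ n) y) - lam ^ n * dist x z| ≤ dist z y / lam ^ n := by
  have hunstable : dist ((f ^ n) x) ((f ^ n) z) = lam ^ n * dist x z :=
    hf.dist_pow_apply_eq_of_pow_mul_dist_le hlam
      (hf.symm.dist_symm_apply_eq_of_mem_localStableSet hlam h.mem_unstable) hxz
  have hstable : dist ((f ^ n) y) ((f ^ n) z) = dist z y / lam ^ n := by
    rw [hf.dist_pow_apply_eq_div_of_mem_localStableSet hlam h.mem_stable, dist_comm]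
  rw [← hunstable, ← hstable, dist_comm _ ((f ^ n) y), dist_comm _ ((f ^ n) z)]
  exact abs_dist_sub_le _ _ _

theorem dist_unstable_sub_le (hf : IsSelfSimilar f ξ lam) (hlam : 1 < lam)
    (h : IsDynamicalTriangle f ξ x y z) {n : ℕ}
    (hxy : lam ^ n * dist x y ≤ ξ) (hxz : lam ^ n * dist x z ≤ ξ) :
    dist x z - dist z y / lam ^ (2 * n) ≤ dist x y := by
  have hpow : 0 < lam ^ n := by positivity
  refine le_of_mul_le_mul_left ?_ hpow
  calc lam ^ n * (dist x z - dist z y / lam ^ (2 * n))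
      = lam ^ n * dist x z - dist z y / lam ^ n := by
        field_simp
        ring
    _ ≤ dist ((f ^ n) x) ((f ^ n) y) :=
      sub_le_of_abs_sub_le_left (hf.abs_dist_pow_apply_sub_le hlam h hxz)
    _ ≤ lam ^ n * dist x y := hf.dist_pow_apply_le hlam.le hxy

theorem abs_dist_sub_dist_unstable_le (hf : IsSelfSimilar f ξ lam) (hlam : 1 < lam)
    (h : IsDynamicalTriangle f ξ x y z) {n : ℕ}
    (hxy : lam ^ n * dist x y ≤ ξ) (hxz : lam ^ n * dist x z ≤ ξ)
    (hstretch : dist (f x) (f y) = lam * dist x y) :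
    |dist x y - dist x z| ≤ dist z y / lam ^ (2 * n) := by
  have hpow : 0 < lam ^ n := by positivity
  refine le_of_mul_le_mul_left ?_ hpow
  calc lam ^ n * |dist x y - dist x z|
      = |dist ((f ^ n) x) ((f ^ n) y) - lam ^ n * dist x z| := by
        rw [hf.dist_pow_apply_eq_of_pow_mul_dist_le hlam hstretch hxy, ← mul_sub, abs_mul,
          abs_of_pos hpow]
    _ ≤ dist z y / lam ^ n := hf.abs_dist_pow_apply_sub_le hlam h hxz
    _ = lam ^ n * (dist z y / lam ^ (2 * n)) := by
        field_simp
        ring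

theorem abs_dist_sub_max_le_of_dist_apply_eq (hf : IsSelfSimilar f ξ lam) (hlam : 1 < lam)
    (h : IsDynamicalTriangle f ξ x y z) {n : ℕ} (hxy : lam ^ n * dist x y ≤ ξ)
    (hxz : lam ^ n * dist x z ≤ ξ) (hzy : lam ^ n * dist z y ≤ ξ)
    (hstretch : dist (f x) (f y) = lam * dist x y) :
    |dist x y - max (dist x z) (dist z y)| ≤ max (dist x z) (dist z y) / lam ^ (2 * n) := by
  have hunstable := abs_le.1 (hf.abs_dist_sub_dist_unstable_le hlam h hxy hxz hstretch)
  have hstable : dist z y - dist x z / lam ^ (2 * n) ≤ dist x y := by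
    simpa only [dist_comm] using hf.symm.dist_unstable_sub_le hlam h.symm
      (by rwa [dist_comm]) (by rwa [dist_comm])
  have hmax_left : dist x z / lam ^ (2 * n) ≤ max (dist x z) (dist z y) / lam ^ (2 * n) := by
    gcongr
    exact le_max_left _ _
  have hmax_right : dist z y / lam ^ (2 * n) ≤ max (dist x z) (dist z y) / lam ^ (2 * n) := by
    gcongr
    exact le_max_right _ _
  rw [abs_le]
  rcases le_total (dist x z) (dist z y) with hle | hle
  · rw [max_eq_right hle] at hmax_left ⊢
    constructor <;> linarith
  · rw [max_eq_left hle] at hmax_right ⊢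
    constructor <;> linarith

theorem abs_dist_sub_max_le (hf : IsSelfSimilar f ξ lam) (hlam : 1 < lam)
    (h : IsDynamicalTriangle f ξ x y z) {n : ℕ} (hxy : lam ^ n * dist x y ≤ ξ)
    (hxz : lam ^ n * dist x z ≤ ξ) (hzy : lam ^ n * dist z y ≤ ξ) :
    |dist x y - max (dist x z) (dist z y)| ≤ max (dist x z) (dist z y) / lam ^ (2 * n) := by
  have hdist : dist x y ≤ ξ :=
    (le_mul_of_one_le_left dist_nonneg (one_le_pow₀ hlam.le)).trans hxy
  rcases hf.dist_apply_eq_or_dist_symm_apply_eq hdist with hfwd | hbwd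
  · exact hf.abs_dist_sub_max_le_of_dist_apply_eq hlam h hxy hxz hzy hfwd
  · have hswap := hf.symm.abs_dist_sub_max_le_of_dist_apply_eq hlam h.symm (n := n)
      (by rwa [dist_comm]) (by rwa [dist_comm]) (by rwa [dist_comm])
      (by rwa [dist_comm, dist_comm y x])
    rwa [dist_comm y x, dist_comm y z, dist_comm z x, max_comm] at hswap

end IsSelfSimilar

theorem stmt_9_general {M : Type*} [PseudoMetricSpace M] {f : Equiv.Perm M} {ξ lam : ℝ}
    (hξ : 0 < ξ) (hlam : 1 < lam) (hf : IsSelfSimilar f ξ lam) :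
    ∀ ε > (0 : ℝ), ∃ δ > (0 : ℝ), ∀ x y z : M, IsDynamicalTriangle f ξ x y z → 0 < dist x y →
      max (dist x y) (max (dist x z) (dist y z)) < δ →
      |dist x y / max (dist x z) (dist z y) - 1| < ε := by
  intro ε hε
  obtain ⟨n, hn⟩ := pow_unbounded_of_one_lt (1 / ε) (one_lt_pow₀ hlam two_ne_zero)
  rw [← pow_mul, one_div_lt hε (by positivity)] at hn
  refine ⟨ξ / lam ^ n, by positivity, fun x y z h hpos hsmall => ?_⟩
  rw [max_lt_iff, max_lt_iff] at hsmall
  simp only [lt_div_iff₀' (pow_pos (zero_lt_one.trans hlam) n)] at hsmall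
  obtain ⟨hxy, hxz, hyz⟩ := hsmall
  have hestimate := hf.abs_dist_sub_max_le hlam h hxy.le hxz.le (dist_comm y z ▸ hyz.le)
  have hmax : 0 < max (dist x z) (dist z y) := by
    rw [lt_max_iff]
    by_contra! hzero
    linarith [dist_triangle x z y]
  rw [div_sub_one hmax.ne', abs_div, abs_of_pos hmax, div_lt_iff₀ hmax]
  calc |dist x y - max (dist x z) (dist z y)|
      ≤ max (dist x z) (dist z y) / lam ^ (2 * n) := hestimate
    _ = 1 / lam ^ (2 * n) * max (dist x z) (dist z y) := by rw [div_eq_mul_one_div, mul_comm]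
    _ < ε * max (dist x z) (dist z y) := by gcongr

theorem stmt_9 {M : Type*} [MetricSpace M] [CompactSpace M]
    (f : Equiv.Perm M) (hf : Continuous f) (hf' : Continuous f.symm)
    (ξ lam : ℝ) (hξ : 0 < ξ) (hlam : 1 < lam)
    (hexp : ∀ x y : M, x ≠ y → ∃ n : ℤ, ξ < dist ((f ^ n) x) ((f ^ n) y))
    (hss : ∀ p q : M, dist p q ≤ ξ →
      max (dist (f p) (f q)) (dist (f.symm p) (f.symm q)) = lam * dist p q) :
    ∀ ε > (0 : ℝ), ∃ δ > (0 : ℝ), ∀ x y z : M,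
      (∀ n : ℕ, dist ((f.symm ^ n) x) ((f.symm ^ n) z) ≤ ξ / (2 * lam)) →
      (∀ n : ℕ, dist ((f ^ n) y) ((f ^ n) z) ≤ ξ / (2 * lam)) →
      x ≠ y →
      max (dist x y) (max (dist x z) (dist y z)) < δ →
      |dist x y / max (dist x z) (dist z y) - 1| < ε := by
  intro ε hε
  obtain ⟨δ, hδ, hratio⟩ := stmt_9_general hξ hlam hss ε hε
  have hle : ξ / (2 * lam) ≤ ξ := div_le_self hξ.le (by linarith)
  exact ⟨δ, hδ, fun x y z hx hy hne => hratio x y z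
    ⟨fun n => (hx n).trans hle, fun n => (hy n).trans hle⟩ (dist_pos.2 hne)⟩
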